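/- Let 0 < α < 2, t > 0, n ∈ ℕ with n ≥ 1, and let X be an ℝ^n-valued random vector with characteristic function E[e^{i⟨ξ, X⟩}] = e^{-t|ξ|^α} for all ξ ∈ ℝ^n (i.e., X is distributed as the time-t marginal of a rotationally symmetric α-stable Lévy process). Then for every κ ∈ (-n, α), the moment E[|X|^κ] is finite and E[|X|^κ] = (2^κ Γ((n+κ)/2) Γ(1 - κ/α) / (Γ(n/2) Γ(1 - κ/2))) t^{κ/α}; moreover, E[|X|^κ] = ∞ whenever κ ≤ -n or κ ≥ α. -/

import Mathlib

open MeasureTheory RealInnerProductSpace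
open Set

/-!
The proof compares the law of `|X|²` with a Gaussian through Laplace transforms. Let `Q` be the
Gaussian measure on `ℝⁿ` with density `π^{-n/2} e^{-|x|²}`, so that
`∫ e^{i⟨2√s x, w⟩} dQ(x) = e^{-s|w|²}`. Integrating the characteristic function of `X` at `2√s x`
against `Q` and exchanging the integrals gives (`laplace_normSq`)
`E e^{-s|X|²} = ∫ exp(-B(x) s^{α/2}) dQ(x)`, where `B(x) = t 2^α |x|^α`.

For `θ < 0` and for `0 < θ < p` respectively, the power `a^{θ/p}` is, up to the constant
`Γ(1 - θ/p) / |θ|`, the integral over `s > 0` of `s^{-θ-1} e^{-a s^p}` and of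
`s^{-θ-1} (1 - e^{-a s^p})` (`kernel_neg`, `kernel_pos`). Hence, by Tonelli, moments of a
nonnegative variable are determined by its Laplace transform. Taking `p = 1` for `|X|²` and
`p = α/2` for `B`, with the same `θ = κ/2`, yields (`moment_transfer`)
`Γ(1 - κ/2) E|X|^κ = Γ(1 - κ/α) ∫ B^{κ/α} dQ`, and the right side is a Gaussian moment, computed in
polar coordinates. These identities are between `ℝ≥0∞`-valued integrals, so finiteness, and the
fact that `X ≠ 0` almost surely, come for free.

Divergence outside `(-n, α)` follows from the formula. If `E|X|^{κ₀}` were finite with `κ₀ ≥ α`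
(or `κ₀ ≤ -n`), then `E|X|^κ ≤ 1 + E|X|^{κ₀}` would be bounded as `κ ↑ α` (or `κ ↓ -n`),
whereas the formula has a pole there, coming from `Γ(1 - κ/α)` (or `Γ((n + κ)/2)`).
-/

/-! ### Powers as integrals of exponentials -/

/-- Negative powers from `e^{-a s^p}`; at `a = 0` both sides are `⊤`. -/
lemma kernel_neg {θ p a : ℝ} (hθ : θ < 0) (hp : 0 < p) (ha : 0 ≤ a) :
    ∫⁻ s in Ioi (0 : ℝ), ENNReal.ofReal (s ^ (-θ - 1) * Real.exp (-(a * s ^ p)))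
      = ENNReal.ofReal (Real.Gamma (1 - θ / p) / -θ) * ENNReal.ofReal a ^ (θ / p) := by
  have hθp : θ / p < 0 := div_neg_of_neg_of_pos hθ hp
  have hΓ : 0 < Real.Gamma (1 - θ / p) / -θ :=
    div_pos (Real.Gamma_pos_of_pos (by linarith)) (by linarith)
  rcases ha.eq_or_lt with rfl | ha
  · rw [ENNReal.ofReal_zero, ENNReal.zero_rpow_of_neg hθp, ENNReal.mul_top (by simpa using hΓ)]
    by_contra hne
    refine not_integrableOn_Ioi_rpow (-θ - 1) ⟨by fun_prop, ?_⟩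
    rw [hasFiniteIntegral_iff_ofReal]
    · simpa using lt_top_iff_ne_top.2 hne
    · filter_upwards [ae_restrict_mem measurableSet_Ioi] with s hs
      exact Real.rpow_nonneg (le_of_lt hs) _
  · have hint := integrableOn_rpow_mul_exp_neg_mul_rpow (p := p) (s := -θ - 1) (b := a)
      (by linarith) hp ha
    have hval := integral_rpow_mul_exp_neg_mul_rpow (p := p) (q := -θ - 1) (b := a) hp
      (by linarith) ha
    rw [ENNReal.ofReal_rpow_of_pos ha, ← ENNReal.ofReal_mul hΓ.le]
    simp only [neg_mul] at hint hval
    rw [← ofReal_integral_eq_lintegral_ofReal hint, hval]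
    · congr 1
      have h1 : 1 - θ / p = -θ / p + 1 := by ring
      rw [h1, Real.Gamma_add_one (by simp [hθ.ne, hp.ne'])]
      have : -(-θ - 1 + 1) / p = θ / p := by ring
      rw [this]
      have : (-θ - 1 + 1) / p = -θ / p := by ring
      rw [this]
      have := hθ.ne
      field_simp
    · filter_upwards [ae_restrict_mem measurableSet_Ioi] with s hs
      exact mul_nonneg (Real.rpow_nonneg (le_of_lt hs) _) (Real.exp_pos _).le

/-- `1 - e^{-c} = ∫₀¹ c e^{-uc} du`. -/
lemma one_sub_exp_eq (c : ℝ) (hc : 0 ≤ c) :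
    ENNReal.ofReal (1 - Real.exp (-c))
      = ∫⁻ u in Ioc (0 : ℝ) 1, ENNReal.ofReal (c * Real.exp (-(u * c))) := by
  have hd : ∀ u : ℝ, HasDerivAt (fun u => -Real.exp (-(u * c))) (c * Real.exp (-(u * c))) u := by
    intro u
    exact HasDerivAt.congr_deriv (((hasDerivAt_id u).mul_const c).neg.exp).neg
      (by simp [mul_comm])
  have hcont : Continuous fun u : ℝ => c * Real.exp (-(u * c)) := by fun_prop
  have h := intervalIntegral.integral_eq_sub_of_hasDerivAt (a := 0) (b := 1) (fun u _ => hd u)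
    (hcont.intervalIntegrable _ _)
  rw [intervalIntegral.integral_of_le zero_le_one] at h
  rw [← ofReal_integral_eq_lintegral_ofReal, h]
  · congr 1; simp; ring
  · exact (hcont.intervalIntegrable (μ := volume) 0 1).1
  · exact ae_of_all _ fun u => mul_nonneg hc (Real.exp_pos _).le

/-- Positive powers from `1 - e^{-a s^p}`. Writing `1 - e^{-c} = ∫₀¹ c e^{-uc} du` and exchanging
the integrals reduces this to `kernel_neg` with exponent `θ - p < 0`. -/
lemma kernel_pos {θ p a : ℝ} (hθ : 0 < θ) (hp : θ < p) (ha : 0 ≤ a) :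
    ∫⁻ s in Ioi (0 : ℝ), ENNReal.ofReal (s ^ (-θ - 1) * (1 - Real.exp (-(a * s ^ p))))
      = ENNReal.ofReal (Real.Gamma (1 - θ / p) / θ) * ENNReal.ofReal a ^ (θ / p) := by
  have hp0 : 0 < p := hθ.trans hp
  have hθp : 0 < θ / p := div_pos hθ hp0
  have hθp1 : θ / p < 1 := (div_lt_one hp0).2 hp
  have hΓ : 0 < Real.Gamma (1 - θ / p) := Real.Gamma_pos_of_pos (by linarith)
  rcases ha.eq_or_lt with rfl | ha
  · simp [hθp]
  calc
    _ = ∫⁻ s in Ioi (0 : ℝ), ∫⁻ u in Ioc (0 : ℝ) 1,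
          ENNReal.ofReal (a * (s ^ (-(θ - p) - 1) * Real.exp (-((u * a) * s ^ p)))) := by
        refine setLIntegral_congr_fun measurableSet_Ioi fun s hs => ?_
        have hs0 : (0 : ℝ) < s := hs
        have hsp : 0 ≤ s ^ (-θ - 1) := Real.rpow_nonneg hs0.le _
        rw [ENNReal.ofReal_mul hsp, one_sub_exp_eq _ (by positivity),
          ← lintegral_const_mul _ (by fun_prop)]
        refine lintegral_congr fun u => ?_
        rw [← ENNReal.ofReal_mul hsp]
        congr 1
        have : -(θ - p) - 1 = (-θ - 1) + p := by ring
        rw [this, Real.rpow_add hs0, mul_assoc u]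
        ring
    _ = ∫⁻ u in Ioc (0 : ℝ) 1, ∫⁻ s in Ioi (0 : ℝ),
          ENNReal.ofReal (a * (s ^ (-(θ - p) - 1) * Real.exp (-((u * a) * s ^ p)))) :=
        lintegral_lintegral_swap (by fun_prop)
    _ = ∫⁻ u in Ioc (0 : ℝ) 1,
          ENNReal.ofReal (Real.Gamma (1 - θ / p) / p * a ^ (θ / p) * u ^ (θ / p - 1)) := by
        refine setLIntegral_congr_fun measurableSet_Ioc fun u hu => ?_
        have hu0 : 0 < u := hu.1
        have hua : 0 < u * a := mul_pos hu.1 ha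
        simp_rw [ENNReal.ofReal_mul ha.le]
        rw [lintegral_const_mul _ (by fun_prop), kernel_neg (by linarith) hp0 hua.le,
          ENNReal.ofReal_rpow_of_pos hua]
        have h1 : (θ - p) / p = θ / p - 1 := by field_simp
        have h2 : 1 - (θ / p - 1) = (1 - θ / p) + 1 := by ring
        rw [h1, h2, Real.Gamma_add_one (by linarith), ← ENNReal.ofReal_mul, ← ENNReal.ofReal_mul ha.le]
        · congr 1
          rw [Real.mul_rpow hu0.le ha.le, Real.rpow_sub_one ha.ne']
          have : p - θ ≠ 0 := by linarith
          have : -(θ - p) = p - θ := by ring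
          rw [this]
          field_simp
        · exact div_nonneg (mul_nonneg (by linarith) hΓ.le) (by linarith)
    _ = _ := by
        have hii : IntervalIntegrable (fun u : ℝ => u ^ (θ / p - 1)) volume 0 1 :=
          intervalIntegral.intervalIntegrable_rpow' (by linarith)
        have hI := integral_rpow (a := 0) (b := 1) (r := θ / p - 1) (Or.inl (by linarith))
        rw [intervalIntegral.integral_of_le zero_le_one] at hI
        rw [← ofReal_integral_eq_lintegral_ofReal, integral_const_mul, hI,
          ENNReal.ofReal_rpow_of_pos ha, ← ENNReal.ofReal_mul (by positivity)]
        · congr 1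
          simp [Real.zero_rpow hθp.ne']
          field_simp
        · exact hii.1.const_mul _
        · filter_upwards [ae_restrict_mem measurableSet_Ioc] with u hu
          have := hu.1
          simp only [Pi.zero_apply]
          positivity

/-! ### Moments and Laplace transforms -/

section
variable {Ω : Type*} [MeasurableSpace Ω]

lemma integrable_exp_neg (P : Measure Ω) [IsFiniteMeasure P]
    {A : Ω → ℝ} (hA : Measurable A) (hA0 : ∀ ω, 0 ≤ A ω) {c : ℝ} (hc : 0 ≤ c) :
    Integrable (fun ω => Real.exp (-(A ω * c))) P := by
  refine Integrable.of_bound (by fun_prop) 1 (ae_of_all _ fun ω => ?_)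
  rw [Real.norm_eq_abs, Real.abs_exp, Real.exp_le_one_iff]
  have := mul_nonneg (hA0 ω) hc
  linarith

lemma moment_laplace_neg (P : Measure Ω) [IsProbabilityMeasure P]
    {A : Ω → ℝ} (hA : Measurable A) (hA0 : ∀ ω, 0 ≤ A ω)
    {θ p : ℝ} (hθ : θ < 0) (hp : 0 < p) :
    ENNReal.ofReal (Real.Gamma (1 - θ / p) / -θ) * ∫⁻ ω, ENNReal.ofReal (A ω) ^ (θ / p) ∂P
      = ∫⁻ s in Ioi (0 : ℝ),
          ENNReal.ofReal (s ^ (-θ - 1) * ∫ ω, Real.exp (-(A ω * s ^ p)) ∂P) := by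
  rw [← lintegral_const_mul _ (by fun_prop)]
  simp_rw [← kernel_neg hθ hp (hA0 _)]
  rw [lintegral_lintegral_swap (by fun_prop)]
  refine setLIntegral_congr_fun measurableSet_Ioi fun s hs => ?_
  have hs0 : (0 : ℝ) < s := hs
  rw [← integral_const_mul, ofReal_integral_eq_lintegral_ofReal]
  · exact (integrable_exp_neg P hA hA0 (by positivity)).const_mul _
  · exact ae_of_all _ fun ω => by positivity

lemma moment_laplace_pos (P : Measure Ω) [IsProbabilityMeasure P]
    {A : Ω → ℝ} (hA : Measurable A) (hA0 : ∀ ω, 0 ≤ A ω)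
    {θ p : ℝ} (hθ : 0 < θ) (hp : θ < p) :
    ENNReal.ofReal (Real.Gamma (1 - θ / p) / θ) * ∫⁻ ω, ENNReal.ofReal (A ω) ^ (θ / p) ∂P
      = ∫⁻ s in Ioi (0 : ℝ),
          ENNReal.ofReal (s ^ (-θ - 1) * (1 - ∫ ω, Real.exp (-(A ω * s ^ p)) ∂P)) := by
  rw [← lintegral_const_mul _ (by fun_prop)]
  simp_rw [← kernel_pos hθ hp (hA0 _)]
  rw [lintegral_lintegral_swap (by fun_prop)]
  refine setLIntegral_congr_fun measurableSet_Ioi fun s hs => ?_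
  have hs0 : (0 : ℝ) < s := hs
  have hi := integrable_exp_neg P hA hA0 (c := s ^ p) (by positivity)
  have h1 : 1 - ∫ ω, Real.exp (-(A ω * s ^ p)) ∂P
      = ∫ ω, (1 - Real.exp (-(A ω * s ^ p))) ∂P := by
    rw [integral_sub (integrable_const _) hi]; simp
  rw [h1, ← integral_const_mul, ofReal_integral_eq_lintegral_ofReal]
  · exact ((integrable_const _).sub hi).const_mul _
  · refine ae_of_all _ fun ω => mul_nonneg (by positivity) ?_
    have := mul_nonneg (hA0 ω) (Real.rpow_nonneg hs0.le p)
    simpa using this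

/-- If the Laplace transform of `A` at `s` equals that of `B` at `s ^ ρ`, then the `θ`-th moment of
`A` and the `θ / ρ`-th moment of `B` are proportional (for `A` and `B` nonnegative). Both sides are
in `ℝ≥0∞`, with `0 ^ θ = ⊤` for `θ < 0`. -/
lemma moment_transfer {E : Type*} [MeasurableSpace E]
    (P : Measure Ω) [IsProbabilityMeasure P] (Q : Measure E) [IsProbabilityMeasure Q]
    {A : Ω → ℝ} (hA : Measurable A) (hA0 : ∀ ω, 0 ≤ A ω)
    {B : E → ℝ} (hB : Measurable B) (hB0 : ∀ x, 0 ≤ B x)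
    {ρ : ℝ} (hρ0 : 0 < ρ) (hρ1 : ρ < 1)
    (hL : ∀ s : ℝ, 0 < s →
      ∫ ω, Real.exp (-(A ω * s)) ∂P = ∫ x, Real.exp (-(B x * s ^ ρ)) ∂Q)
    {θ : ℝ} (hθ : θ < ρ) :
    ENNReal.ofReal (Real.Gamma (1 - θ)) * ∫⁻ ω, ENNReal.ofReal (A ω) ^ θ ∂P
      = ENNReal.ofReal (Real.Gamma (1 - θ / ρ)) * ∫⁻ x, ENNReal.ofReal (B x) ^ (θ / ρ) ∂Q := by
  -- The factor `1 / |θ|` common to both sides cancels.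
  have cancel : ∀ {a b : ℝ} {x y : ENNReal} {d : ℝ}, 0 < d →
      ENNReal.ofReal (a / d) * x = ENNReal.ofReal (b / d) * y →
      ENNReal.ofReal a * x = ENNReal.ofReal b * y := by
    intro a b x y d hd h
    have e : ∀ c : ℝ, ENNReal.ofReal c = ENNReal.ofReal d * ENNReal.ofReal (c / d) := by
      intro c
      rw [← ENNReal.ofReal_mul hd.le, mul_div_cancel₀ _ hd.ne']
    rw [e a, e b, mul_assoc, mul_assoc, h]
  rcases lt_trichotomy θ 0 with h | rfl | h
  · have h1 := moment_laplace_neg P hA hA0 h one_pos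
    have h2 := moment_laplace_neg Q hB hB0 h hρ0
    simp only [div_one, Real.rpow_one] at h1
    refine cancel (d := -θ) (by linarith) ?_
    rw [h1, h2]
    refine setLIntegral_congr_fun measurableSet_Ioi fun s hs => ?_
    simp only [hL s hs]
  · simp
  · have h1 := moment_laplace_pos P hA hA0 h (hθ.trans hρ1)
    have h2 := moment_laplace_pos Q hB hB0 h hθ
    simp only [div_one, Real.rpow_one] at h1
    refine cancel (d := θ) h ?_
    rw [h1, h2]
    refine setLIntegral_congr_fun measurableSet_Ioi fun s hs => ?_
    simp only [hL s hs]
end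
/-! ### The Gaussian measure -/

/-- The centred Gaussian probability measure on `ℝⁿ` with covariance `1/2`, that is with density
`π^{-n/2} e^{-|x|²}`. -/
noncomputable def gaussMeasure (n : ℕ) : Measure (EuclideanSpace ℝ (Fin n)) :=
  volume.withDensity fun x => ENNReal.ofReal (Real.pi ^ (-(n : ℝ) / 2) * Real.exp (-‖x‖ ^ 2))

/-- Integration in polar coordinates, leaving the volume of the unit ball unevaluated: it cancels
against the case `κ = 0`, where the integral is `π^{n/2}`. -/
lemma integral_radial {n : ℕ} (hn : 1 ≤ n) {κ : ℝ} (hκ : -(n : ℝ) < κ) :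
    ∫ x : EuclideanSpace ℝ (Fin n), ‖x‖ ^ κ * Real.exp (-‖x‖ ^ 2)
      = n * (volume.real (Metric.ball (0 : EuclideanSpace ℝ (Fin n)) 1)
          * (Real.Gamma ((n + κ) / 2) / 2)) := by
  have : Nontrivial (EuclideanSpace ℝ (Fin n)) := by
    have : Nonempty (Fin n) := ⟨⟨0, hn⟩⟩
    infer_instance
  rw [integral_fun_norm_addHaar volume (fun r : ℝ => r ^ κ * Real.exp (-r ^ 2)),
    finrank_euclideanSpace_fin, nsmul_eq_mul, smul_eq_mul]
  congr 2
  have h := integral_rpow_mul_exp_neg_mul_rpow (p := 2) (q := n - 1 + κ) (b := 1) two_pos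
    (by linarith) one_pos
  rw [Real.one_rpow, one_mul, show (n - 1 + κ + 1) / 2 = (n + κ) / 2 by ring,
    one_div_mul_eq_div] at h
  rw [← h]
  refine setIntegral_congr_fun measurableSet_Ioi fun r hr => ?_
  have hr : (0 : ℝ) < r := hr
  rw [Real.rpow_add hr, smul_eq_mul, ← Real.rpow_natCast r (n - 1), Nat.cast_sub hn]
  simp [mul_assoc]

lemma lintegral_norm_rpow_gaussMeasure {n : ℕ} (hn : 1 ≤ n) {κ : ℝ} (hκ : -(n : ℝ) < κ) :
    ∫⁻ x, ENNReal.ofReal ‖x‖ ^ κ ∂(gaussMeasure n)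
      = ENNReal.ofReal (Real.Gamma ((n + κ) / 2) / Real.Gamma (n / 2)) := by
  have : Nontrivial (EuclideanSpace ℝ (Fin n)) := by
    have : Nonempty (Fin n) := ⟨⟨0, hn⟩⟩
    infer_instance
  have hn0 : (0 : ℝ) < n := by exact_mod_cast hn
  have hΓn : 0 < Real.Gamma (n / 2) := Real.Gamma_pos_of_pos (by positivity)
  have hΓκ : 0 < Real.Gamma ((n + κ) / 2) := Real.Gamma_pos_of_pos (by linarith)
  have hnorm : n * (volume.real (Metric.ball (0 : EuclideanSpace ℝ (Fin n)) 1)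
      * (Real.Gamma (n / 2) / 2)) = Real.pi ^ ((n : ℝ) / 2) := by
    have h0 := integral_radial hn (κ := 0) (by linarith)
    have h1 := GaussianFourier.integral_rexp_neg_mul_sq_norm
      (V := EuclideanSpace ℝ (Fin n)) one_pos
    simp only [Real.rpow_zero, one_mul, add_zero] at h0
    simp only [neg_mul, one_mul, div_one, finrank_euclideanSpace_fin] at h1
    rw [← h0, h1]
  have hv : 0 < volume.real (Metric.ball (0 : EuclideanSpace ℝ (Fin n)) 1) :=
    ENNReal.toReal_pos (Metric.measure_ball_pos _ _ one_pos).ne' measure_ball_lt_top.ne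
  have hπ : (0 : ℝ) < Real.pi ^ (-(n : ℝ) / 2) := by positivity
  have hint : Integrable
      (fun x : EuclideanSpace ℝ (Fin n) => ‖x‖ ^ κ * Real.exp (-‖x‖ ^ 2)) := by
    by_contra hni
    have h := integral_radial hn hκ
    rw [integral_undef hni] at h
    have : 0 < n * (volume.real (Metric.ball (0 : EuclideanSpace ℝ (Fin n)) 1)
          * (Real.Gamma ((n + κ) / 2) / 2)) := by positivity
    linarith
  calc
    _ = ∫⁻ x : EuclideanSpace ℝ (Fin n), ENNReal.ofReal
          (Real.pi ^ (-(n : ℝ) / 2) * (‖x‖ ^ κ * Real.exp (-‖x‖ ^ 2))) := by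
        rw [gaussMeasure, lintegral_withDensity_eq_lintegral_mul _ (by fun_prop) (by fun_prop)]
        -- The origin, where `ENNReal.ofReal ‖x‖ ^ κ` may be infinite, is a null set.
        have h0 : ∀ᵐ x : EuclideanSpace ℝ (Fin n), x ≠ 0 := by
          simp [ae_iff]
        refine lintegral_congr_ae ?_
        filter_upwards [h0] with x hx
        rw [Pi.mul_apply, ENNReal.ofReal_rpow_of_pos (norm_pos_iff.2 hx),
          ← ENNReal.ofReal_mul (by positivity)]
        ring_nf
    _ = _ := by
        rw [← ofReal_integral_eq_lintegral_ofReal (hint.const_mul _)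
          (ae_of_all _ fun x => by positivity), integral_const_mul, integral_radial hn hκ]
        congr 1
        have : Real.pi ^ (-(n : ℝ) / 2) * Real.pi ^ ((n : ℝ) / 2) = 1 := by
          rw [← Real.rpow_add Real.pi_pos]; simp [neg_div]
        rw [← hnorm] at this
        rw [eq_div_iff hΓn.ne']
        linear_combination Real.Gamma ((n + κ) / 2) * this

lemma isProbabilityMeasure_gaussMeasure {n : ℕ} (hn : 1 ≤ n) :
    IsProbabilityMeasure (gaussMeasure n) := by
  have hn0 : (0 : ℝ) < n := by exact_mod_cast hn
  have h := lintegral_norm_rpow_gaussMeasure hn (κ := 0) (by linarith)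
  have hΓn : 0 < Real.Gamma (n / 2) := Real.Gamma_pos_of_pos (by positivity)
  refine ⟨?_⟩
  simpa [hΓn.ne'] using h

lemma fourier_gaussMeasure {n : ℕ} (c : ℝ) (w : EuclideanSpace ℝ (Fin n)) :
    ∫ x, Complex.exp ((⟪c • x, w⟫ : ℂ) * Complex.I) ∂(gaussMeasure n)
      = (Real.exp (-(c ^ 2 / 4 * ‖w‖ ^ 2)) : ℂ) := by
  have h := GaussianFourier.integral_cexp_neg_mul_sq_norm_add (b := 1) (by simp)
    (c * Complex.I) w
  rw [gaussMeasure, integral_withDensity_eq_integral_toReal_smul (by fun_prop) (by simp)]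
  have e : ∀ x : EuclideanSpace ℝ (Fin n),
      (ENNReal.ofReal (Real.pi ^ (-(n : ℝ) / 2) * Real.exp (-‖x‖ ^ 2))).toReal •
        Complex.exp ((⟪c • x, w⟫ : ℂ) * Complex.I)
      = ((Real.pi ^ (-(n : ℝ) / 2) : ℝ) : ℂ) *
        Complex.exp (-1 * (‖x‖ : ℂ) ^ 2 + (c * Complex.I) * (⟪w, x⟫ : ℂ)) := by
    intro x
    rw [ENNReal.toReal_ofReal (by positivity), Complex.real_smul, Complex.exp_add,
      real_inner_smul_left, real_inner_comm]
    push_cast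
    rw [mul_assoc]
    congr 3
    · ring_nf
    · ring_nf
  simp_rw [e]
  rw [integral_const_mul, h, finrank_euclideanSpace_fin, ← mul_assoc]
  have hπ : ((Real.pi ^ (-(n : ℝ) / 2) : ℝ) : ℂ) * ((Real.pi : ℂ) / 1) ^ ((n : ℂ) / 2) = 1 := by
    have h1 : ((Real.pi : ℂ) / 1) ^ ((n : ℂ) / 2) = ((Real.pi ^ ((n : ℝ) / 2) : ℝ) : ℂ) := by
      rw [Complex.ofReal_cpow Real.pi_pos.le]; simp
    rw [h1, ← Complex.ofReal_mul, ← Real.rpow_add Real.pi_pos]; simp [neg_div]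
  rw [hπ, one_mul]
  push_cast
  congr 1
  rw [mul_pow, Complex.I_sq]
  ring

/-! ### Moments of the stable law -/

/-- The Laplace transform of `|X|²`, obtained by integrating the characteristic function of `X` at
`2√s x` against the Gaussian measure in `x`. -/
lemma laplace_normSq
    {α t : ℝ} {n : ℕ} (hn : 1 ≤ n)
    {Ω : Type*} [MeasurableSpace Ω] (P : Measure Ω) [IsProbabilityMeasure P]
    {X : Ω → EuclideanSpace ℝ (Fin n)} (hX : Measurable X)
    (hchar : ∀ ξ : EuclideanSpace ℝ (Fin n),
      ∫ ω, Complex.exp ((⟪ξ, X ω⟫ : ℂ) * Complex.I) ∂P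
        = (Real.exp (-(t * ‖ξ‖ ^ α)) : ℂ)) {s : ℝ} (hs : 0 < s) :
    ∫ ω, Real.exp (-(‖X ω‖ ^ 2 * s)) ∂P
      = ∫ x, Real.exp (-(t * 2 ^ α * ‖x‖ ^ α * s ^ (α / 2))) ∂(gaussMeasure n) := by
  have := isProbabilityMeasure_gaussMeasure hn
  have hsw : ∫ ω, ∫ x, Complex.exp ((⟪(2 * √s) • x, X ω⟫ : ℂ) * Complex.I) ∂(gaussMeasure n) ∂P
      = ∫ x, ∫ ω, Complex.exp ((⟪(2 * √s) • x, X ω⟫ : ℂ) * Complex.I) ∂P ∂(gaussMeasure n) := by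
    refine integral_integral_swap ?_
    refine Integrable.of_bound (C := 1) ?_ (ae_of_all _ fun z => ?_)
    · refine Measurable.aestronglyMeasurable ?_
      unfold Function.uncurry
      fun_prop
    · simp only [Function.uncurry, Complex.norm_exp_ofReal_mul_I, le_refl]
  simp_rw [fourier_gaussMeasure, hchar] at hsw
  rw [integral_complex_ofReal, integral_complex_ofReal] at hsw
  have h := Complex.ofReal_injective hsw
  have e1 : ∀ ω, (2 * √s) ^ 2 / 4 * ‖X ω‖ ^ 2 = ‖X ω‖ ^ 2 * s := by
    intro ω
    rw [mul_pow, Real.sq_sqrt hs.le]; ring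
  have e2 : ∀ x : EuclideanSpace ℝ (Fin n),
      t * ‖(2 * √s) • x‖ ^ α = t * 2 ^ α * ‖x‖ ^ α * s ^ (α / 2) := by
    intro x
    rw [norm_smul, Real.norm_of_nonneg (by positivity), Real.mul_rpow (by positivity) (by positivity),
      Real.mul_rpow (by positivity) (by positivity), Real.sqrt_eq_rpow, ← Real.rpow_mul hs.le]
    ring_nf
  simp_rw [e1, e2] at h
  exact h

/-- The moment formula in `ℝ≥0∞`. For `κ < 0` the integrand is `⊤` where `X = 0`, so the statement
also contains that this event is null. -/
lemma lintegral_norm_rpow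
    {α t : ℝ} (hα0 : 0 < α) (hα2 : α < 2) (ht : 0 < t) {n : ℕ} (hn : 1 ≤ n)
    {Ω : Type*} [MeasurableSpace Ω] (P : Measure Ω) [IsProbabilityMeasure P]
    {X : Ω → EuclideanSpace ℝ (Fin n)} (hX : Measurable X)
    (hchar : ∀ ξ : EuclideanSpace ℝ (Fin n),
      ∫ ω, Complex.exp ((⟪ξ, X ω⟫ : ℂ) * Complex.I) ∂P
        = (Real.exp (-(t * ‖ξ‖ ^ α)) : ℂ))
    {κ : ℝ} (hκn : -(n : ℝ) < κ) (hκα : κ < α) :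
    ∫⁻ ω, ENNReal.ofReal ‖X ω‖ ^ κ ∂P =
      ENNReal.ofReal (2 ^ κ * Real.Gamma (((n:ℝ) + κ)/2) * Real.Gamma (1 - κ/α) /
            (Real.Gamma ((n:ℝ)/2) * Real.Gamma (1 - κ/2)) * t ^ (κ/α)) := by
  have := isProbabilityMeasure_gaussMeasure hn
  have hn0 : (0 : ℝ) < n := by exact_mod_cast hn
  have hΓn : 0 < Real.Gamma (n / 2) := Real.Gamma_pos_of_pos (by positivity)
  have hΓκ : 0 < Real.Gamma ((n + κ) / 2) := Real.Gamma_pos_of_pos (by linarith)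
  have hΓ2 : 0 < Real.Gamma (1 - κ / 2) := Real.Gamma_pos_of_pos (by linarith)
  have hΓα : 0 < Real.Gamma (1 - κ / α) :=
    Real.Gamma_pos_of_pos (by have := (div_lt_one hα0).2 hκα; linarith)
  have hT := moment_transfer P (gaussMeasure n)
    (A := fun ω => ‖X ω‖ ^ 2) (by fun_prop) (fun ω => by positivity)
    (B := fun x => t * 2 ^ α * ‖x‖ ^ α) (by fun_prop) (fun x => by positivity)
    (ρ := α / 2) (by linarith) (by linarith)
    (fun s hs => laplace_normSq hn P hX hchar hs) (θ := κ / 2) (by linarith)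
  have hρ : κ / 2 / (α / 2) = κ / α := by field_simp
  have eA : ∀ ω, ENNReal.ofReal (‖X ω‖ ^ 2) ^ (κ / 2) = ENNReal.ofReal ‖X ω‖ ^ κ := by
    intro ω
    rw [ENNReal.ofReal_pow (norm_nonneg _), ← ENNReal.rpow_natCast, ← ENNReal.rpow_mul]
    congr 1
    push_cast
    ring
  have eB : ∀ x : EuclideanSpace ℝ (Fin n), ENNReal.ofReal (t * 2 ^ α * ‖x‖ ^ α) ^ (κ / α)
      = ENNReal.ofReal (t ^ (κ / α) * 2 ^ κ) * ENNReal.ofReal ‖x‖ ^ κ := by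
    intro x
    have h1 : (2 ^ α : ℝ) ^ (κ / α) = 2 ^ κ := by
      rw [← Real.rpow_mul two_pos.le, mul_div_cancel₀ _ hα0.ne']
    rw [ENNReal.ofReal_mul (by positivity),
      ENNReal.mul_rpow_of_ne_top ENNReal.ofReal_ne_top ENNReal.ofReal_ne_top,
      ENNReal.ofReal_rpow_of_pos (by positivity), Real.mul_rpow ht.le (by positivity), h1,
      ← ENNReal.ofReal_rpow_of_nonneg (norm_nonneg _) hα0.le, ← ENNReal.rpow_mul,
      mul_div_cancel₀ _ hα0.ne']
  simp_rw [hρ, eA, eB] at hT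
  rw [lintegral_const_mul _ (by fun_prop), lintegral_norm_rpow_gaussMeasure hn hκn,
    ← ENNReal.ofReal_mul (by positivity), ← ENNReal.ofReal_mul hΓα.le] at hT
  rw [← ENNReal.mul_right_inj (a := ENNReal.ofReal (Real.Gamma (1 - κ / 2)))
    (by simpa using hΓ2) ENNReal.ofReal_ne_top, hT, ← ENNReal.ofReal_mul hΓ2.le]
  congr 1
  have hΓ2' := hΓ2.ne'
  generalize Real.Gamma (1 - κ / 2) = G at hΓ2'
  field_simp

/-! ### Divergence at the endpoints -/

/-- Bound on an intermediate moment by a more extreme one. With `0 ^ κ = 0` for `κ ≠ 0` this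
holds at `x = 0` as well. -/
lemma rpow_le_one_add_rpow {x κ κ₀ : ℝ} (hx : 0 ≤ x) (hκ : κ ≠ 0)
    (h : 0 ≤ κ ∧ κ ≤ κ₀ ∨ κ ≤ 0 ∧ κ₀ ≤ κ) : x ^ κ ≤ 1 + x ^ κ₀ := by
  rcases hx.eq_or_lt with rfl | hx
  · rw [Real.zero_rpow hκ]
    have := Real.rpow_nonneg le_rfl κ₀
    linarith
  · have h0 : 0 < x ^ κ₀ := Real.rpow_pos_of_pos hx _
    rcases le_total x 1 with hx1 | hx1 <;> rcases h with ⟨h1, h2⟩ | ⟨h1, h2⟩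
    · linarith [Real.rpow_le_one hx.le hx1 h1]
    · linarith [Real.rpow_le_rpow_of_exponent_ge hx hx1 h2]
    · linarith [Real.rpow_le_rpow_of_exponent_le hx1 h2]
    · linarith [Real.rpow_le_one_of_one_le_of_nonpos hx1 h1]

open Filter Topology in
/-- If `d κ * F κ = g κ` near `κ₁`, where `d κ → 0` and `g κ` tends to a positive limit, then
`F` is unbounded near `κ₁`. -/
lemma not_bounded_of_mul_eq {F d g : ℝ → ℝ} {l : Filter ℝ} [l.NeBot] {κ₁ C : ℝ} (hl : l ≤ 𝓝 κ₁)
    (hd : ContinuousAt d κ₁) (hd1 : d κ₁ = 0) (hg : ContinuousAt g κ₁) (hg1 : 0 < g κ₁)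
    (hF : ∀ᶠ κ in l, 0 ≤ d κ ∧ d κ * F κ = g κ ∧ F κ ≤ C) : False := by
  have h1 : Tendsto g l (𝓝 (g κ₁)) := hg.tendsto.mono_left hl
  have h2 : Tendsto (fun κ => d κ * C) l (𝓝 (d κ₁ * C)) :=
    (hd.tendsto.mono_left hl).mul_const C
  rw [hd1, zero_mul] at h2
  refine absurd (le_of_tendsto_of_tendsto h1 h2 ?_) (not_le.2 hg1)
  filter_upwards [hF] with κ hκ
  rw [← hκ.2.1]
  exact mul_le_mul_of_nonneg_left hκ.2.2 hκ.1

lemma continuousAt_Gamma_of_pos {x : ℝ} (hx : 0 < x) : ContinuousAt Real.Gamma x :=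
  (Real.differentiableAt_Gamma fun m => by
    have : (0 : ℝ) ≤ m := m.cast_nonneg
    linarith).continuousAt

/-! ### Conclusion -/

theorem stmt_16
    (α t : ℝ) (hα0 : 0 < α) (hα2 : α < 2) (ht : 0 < t)
    (n : ℕ) (hn : 1 ≤ n)
    {Ω : Type*} [MeasurableSpace Ω] (P : Measure Ω) (hP : IsProbabilityMeasure P)
    (X : Ω → EuclideanSpace ℝ (Fin n)) (hXmeas : Measurable X)
    (hchar : ∀ ξ : EuclideanSpace ℝ (Fin n),
      ∫ ω, Complex.exp ((⟪ξ, X ω⟫ : ℂ) * Complex.I) ∂P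
        = (Real.exp (-(t * ‖ξ‖ ^ α)) : ℂ)) :
    (∀ κ : ℝ, -(n:ℝ) < κ → κ < α →
      Integrable (fun ω => ‖X ω‖ ^ κ) P ∧
      ∫ ω, ‖X ω‖ ^ κ ∂P =
        2 ^ κ * Real.Gamma (((n:ℝ) + κ)/2) * Real.Gamma (1 - κ/α) /
            (Real.Gamma ((n:ℝ)/2) * Real.Gamma (1 - κ/2)) *
          t ^ (κ/α)) ∧
    (∀ κ : ℝ, κ ≤ -(n:ℝ) ∨ α ≤ κ →
      ∫⁻ ω, ENNReal.ofReal (‖X ω‖ ^ κ) ∂P = ⊤) := by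
  have hn0 : (0 : ℝ) < n := by exact_mod_cast hn
  have hΓn : 0 < Real.Gamma (n / 2) := Real.Gamma_pos_of_pos (by positivity)
  have hm : ∀ κ : ℝ, AEStronglyMeasurable (fun ω => ‖X ω‖ ^ κ) P :=
    fun κ => (hXmeas.norm.pow_const κ).aestronglyMeasurable
  have main : ∀ κ : ℝ, -(n:ℝ) < κ → κ < α →
      Integrable (fun ω => ‖X ω‖ ^ κ) P ∧
      ∫ ω, ‖X ω‖ ^ κ ∂P =
        2 ^ κ * Real.Gamma (((n:ℝ) + κ)/2) * Real.Gamma (1 - κ/α) /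
            (Real.Gamma ((n:ℝ)/2) * Real.Gamma (1 - κ/2)) *
          t ^ (κ/α) := by
    intro κ hκn hκα
    have hM := lintegral_norm_rpow hα0 hα2 ht hn P hXmeas hchar hκn hκα
    have hfin : ∫⁻ ω, ENNReal.ofReal ‖X ω‖ ^ κ ∂P ≠ ⊤ := hM ▸ ENNReal.ofReal_ne_top
    -- Off the event `X = 0`, null if `κ < 0` since the moment is finite, the real power is the
    -- `ℝ≥0∞` power.
    have hae : ∀ᵐ ω ∂P, ENNReal.ofReal ‖X ω‖ ^ κ = ENNReal.ofReal (‖X ω‖ ^ κ) := by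
      filter_upwards [ae_lt_top (by fun_prop) hfin] with ω hω
      rcases (norm_nonneg (X ω)).eq_or_lt with h0 | h0
      · rw [← h0] at hω ⊢
        rcases lt_or_ge κ 0 with hκ | hκ
        · simp [ENNReal.zero_rpow_of_neg hκ] at hω
        · exact ENNReal.ofReal_rpow_of_nonneg le_rfl hκ
      · exact ENNReal.ofReal_rpow_of_pos h0
    rw [lintegral_congr_ae hae] at hM hfin
    have h0 : 0 ≤ᵐ[P] fun ω => ‖X ω‖ ^ κ := ae_of_all _ fun ω => by positivity
    refine ⟨⟨hm κ, ?_⟩, ?_⟩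
    · rw [hasFiniteIntegral_iff_ofReal h0]
      exact hfin.lt_top
    · rw [integral_eq_lintegral_of_nonneg_ae h0 (hm κ), hM, ENNReal.toReal_ofReal]
      have h1 : 0 < Real.Gamma ((n + κ) / 2) := Real.Gamma_pos_of_pos (by linarith)
      have h2 : 0 < Real.Gamma (1 - κ / 2) := Real.Gamma_pos_of_pos (by linarith)
      have h3 : 0 < Real.Gamma (1 - κ / α) :=
        Real.Gamma_pos_of_pos (by have := (div_lt_one hα0).2 hκα; linarith)
      positivity
  refine ⟨main, fun κ₀ hκ₀ => ?_⟩
  by_contra hne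
  have hint : Integrable (fun ω => ‖X ω‖ ^ κ₀) P := by
    refine ⟨hm κ₀, ?_⟩
    rw [hasFiniteIntegral_iff_ofReal (ae_of_all _ fun ω => by positivity)]
    exact lt_top_iff_ne_top.2 hne
  have bound : ∀ κ : ℝ, -(n:ℝ) < κ → κ < α → κ ≠ 0 → (0 ≤ κ ∧ κ ≤ κ₀ ∨ κ ≤ 0 ∧ κ₀ ≤ κ) →
      2 ^ κ * Real.Gamma (((n:ℝ) + κ)/2) * Real.Gamma (1 - κ/α) /
            (Real.Gamma ((n:ℝ)/2) * Real.Gamma (1 - κ/2)) *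
          t ^ (κ/α) ≤ ∫ ω, (1 + ‖X ω‖ ^ κ₀) ∂P := by
    intro κ h1 h2 h3 h4
    rw [← (main κ h1 h2).2]
    exact integral_mono (main κ h1 h2).1 ((integrable_const _).add hint)
      fun ω => rpow_le_one_add_rpow (norm_nonneg _) h3 h4
  rcases hκ₀ with hκ₀ | hκ₀
  · have p1 : 0 < Real.Gamma (1 - -(n:ℝ) / α) := Real.Gamma_pos_of_pos (by
      have := div_pos hn0 hα0
      rw [neg_div]; linarith)
    have p2 : 0 < Real.Gamma (1 - -(n:ℝ) / 2) := Real.Gamma_pos_of_pos (by linarith)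
    have p3 : 0 < Real.Gamma (((n:ℝ) + -(n:ℝ)) / 2 + 1) := Real.Gamma_pos_of_pos (by simp)
    refine not_bounded_of_mul_eq (l := nhdsWithin (-(n:ℝ)) (Ioi (-(n:ℝ)))) (κ₁ := -(n:ℝ))
      (d := fun κ => ((n:ℝ) + κ) / 2)
      (g := fun κ => 2 ^ κ * Real.Gamma (((n:ℝ) + κ)/2 + 1) * Real.Gamma (1 - κ/α) /
            (Real.Gamma ((n:ℝ)/2) * Real.Gamma (1 - κ/2)) * t ^ (κ/α))
      nhdsWithin_le_nhds (by fun_prop) (by simp) ?_ (by positivity) ?_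
      (F := fun κ => 2 ^ κ * Real.Gamma (((n:ℝ) + κ)/2) * Real.Gamma (1 - κ/α) /
            (Real.Gamma ((n:ℝ)/2) * Real.Gamma (1 - κ/2)) * t ^ (κ/α))
      (C := ∫ ω, (1 + ‖X ω‖ ^ κ₀) ∂P)
    · have c1 : ContinuousAt (fun κ : ℝ => (2:ℝ) ^ κ) (-(n:ℝ)) :=
        (Real.continuous_const_rpow two_ne_zero).continuousAt
      have c2 : ContinuousAt (fun κ : ℝ => t ^ (κ / α)) (-(n:ℝ)) :=
        ((Real.continuous_const_rpow ht.ne').comp (continuous_id.div_const α)).continuousAt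
      have c3 : ContinuousAt (fun κ : ℝ => Real.Gamma (((n:ℝ) + κ)/2 + 1)) (-(n:ℝ)) :=
        ContinuousAt.comp (g := Real.Gamma) (continuousAt_Gamma_of_pos (by simp)) (by fun_prop)
      have c4 : ContinuousAt (fun κ : ℝ => Real.Gamma (1 - κ/α)) (-(n:ℝ)) :=
        ContinuousAt.comp (g := Real.Gamma) (continuousAt_Gamma_of_pos (by
          have := div_pos hn0 hα0
          rw [neg_div]; linarith)) (by fun_prop)
      have c5 : ContinuousAt (fun κ : ℝ => Real.Gamma (1 - κ/2)) (-(n:ℝ)) :=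
        ContinuousAt.comp (g := Real.Gamma) (continuousAt_Gamma_of_pos (by linarith))
          (by fun_prop)
      exact (((c1.mul c3).mul c4).div (continuousAt_const.mul c5) (mul_pos hΓn p2).ne').mul c2
    · filter_upwards [Ioo_mem_nhdsGT (show -(n:ℝ) < 0 by linarith)] with κ hκ
      obtain ⟨h1, h2⟩ := hκ
      refine ⟨by linarith, ?_, bound κ h1 (by linarith) h2.ne (Or.inr ⟨h2.le, by linarith⟩)⟩
      have : ((n:ℝ) + κ) / 2 ≠ 0 := by
        have : 0 < (n:ℝ) + κ := by linarith
        positivity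
      rw [Real.Gamma_add_one this]
      ring
  · have p1 : 0 < Real.Gamma (1 - α / α + 1) := Real.Gamma_pos_of_pos (by
      rw [div_self hα0.ne']; norm_num)
    have p2 : 0 < Real.Gamma (1 - α / 2) := Real.Gamma_pos_of_pos (by linarith)
    have p3 : 0 < Real.Gamma (((n:ℝ) + α) / 2) := Real.Gamma_pos_of_pos (by positivity)
    refine not_bounded_of_mul_eq (l := nhdsWithin α (Iio α)) (κ₁ := α)
      (d := fun κ => 1 - κ / α)
      (g := fun κ => 2 ^ κ * Real.Gamma (((n:ℝ) + κ)/2) * Real.Gamma (1 - κ/α + 1) /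
            (Real.Gamma ((n:ℝ)/2) * Real.Gamma (1 - κ/2)) * t ^ (κ/α))
      nhdsWithin_le_nhds (by fun_prop) (by simp [hα0.ne']) ?_ (by positivity) ?_
      (F := fun κ => 2 ^ κ * Real.Gamma (((n:ℝ) + κ)/2) * Real.Gamma (1 - κ/α) /
            (Real.Gamma ((n:ℝ)/2) * Real.Gamma (1 - κ/2)) * t ^ (κ/α))
      (C := ∫ ω, (1 + ‖X ω‖ ^ κ₀) ∂P)
    · have c1 : ContinuousAt (fun κ : ℝ => (2:ℝ) ^ κ) α :=
        (Real.continuous_const_rpow two_ne_zero).continuousAt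
      have c2 : ContinuousAt (fun κ : ℝ => t ^ (κ / α)) α :=
        ((Real.continuous_const_rpow ht.ne').comp (continuous_id.div_const α)).continuousAt
      have c3 : ContinuousAt (fun κ : ℝ => Real.Gamma (((n:ℝ) + κ)/2)) α :=
        ContinuousAt.comp (g := Real.Gamma) (continuousAt_Gamma_of_pos (by positivity))
          (by fun_prop)
      have c4 : ContinuousAt (fun κ : ℝ => Real.Gamma (1 - κ/α + 1)) α :=
        ContinuousAt.comp (g := Real.Gamma) (continuousAt_Gamma_of_pos (by
          rw [div_self hα0.ne']; norm_num)) (by fun_prop)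
      have c5 : ContinuousAt (fun κ : ℝ => Real.Gamma (1 - κ/2)) α :=
        ContinuousAt.comp (g := Real.Gamma) (continuousAt_Gamma_of_pos (by linarith))
          (by fun_prop)
      exact (((c1.mul c3).mul c4).div (continuousAt_const.mul c5) (mul_pos hΓn p2).ne').mul c2
    · filter_upwards [Ioo_mem_nhdsLT hα0] with κ hκ
      obtain ⟨h1, h2⟩ := hκ
      have h3 : 0 < 1 - κ / α := by have := (div_lt_one hα0).2 h2; linarith
      refine ⟨h3.le, ?_, bound κ (by linarith) h2 h1.ne' (Or.inl ⟨h1.le, by linarith⟩)⟩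
      rw [Real.Gamma_add_one h3.ne']
      ring
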